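/- In a finite MDP, the almost-sure winning region for weakly synchronizing in T contains d0 if and only if there exists T' ⊆ T such that d0 is limit-sure eventually synchronizing in T' and (the uniform distribution on) T' is limit-sure eventually synchronizing in Pre(T'). -/

import Mathlib

open scoped BigOperators
open Classical Filter

/-- A finite Markov decision process with real transition probabilities. -/
structure MDP (Q A : Type) [Fintype Q] [Fintype A] where
  δ : Q → A → Q → ℝ
  δ_nonneg : ∀ q a q', 0 ≤ δ q a q'
  δ_sum : ∀ q a, ∑ q', δ q a q' = 1

namespace MDP

variable {Q A : Type} [Fintype Q] [Fintype A]

/-- `d` is a probability distribution. -/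
def IsDist (d : Q → ℝ) : Prop := (∀ q, 0 ≤ d q) ∧ ∑ q, d q = 1

/-- A (randomized, history-dependent) strategy maps a history (list of past
state-action pairs) and the current state to a distribution over actions. -/
def IsStrategy (σ : List (Q × A) → Q → A → ℝ) : Prop :=
  (∀ h q a, 0 ≤ σ h q a) ∧ ∀ h q, ∑ a, σ h q a = 1

/-- The probability of the finite path `qs` (with actions `as`) of length `i`,
under strategy `σ` from initial distribution `d0`. -/
noncomputable def pathProb (M : MDP Q A) (σ : List (Q × A) → Q → A → ℝ)
    (d0 : Q → ℝ) (i : ℕ) (qs : Fin (i + 1) → Q) (as : Fin i → A) : ℝ :=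
  d0 (qs 0) * ∏ j : Fin i,
    (σ (List.ofFn (fun k : Fin j.val =>
          (qs ⟨k.val, by have := k.isLt; have := j.isLt; omega⟩,
           as ⟨k.val, by have := k.isLt; have := j.isLt; omega⟩)))
        (qs j.castSucc) (as j))
      * M.δ (qs j.castSucc) (as j) (qs j.succ)

/-- The distribution over states after `i` steps (`M^σ_i`). -/
noncomputable def stepDist (M : MDP Q A) (σ : List (Q × A) → Q → A → ℝ)
    (d0 : Q → ℝ) (i : ℕ) (q : Q) : ℝ :=
  ∑ qs : Fin (i + 1) → Q, ∑ as : Fin i → A,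
    if qs (Fin.last i) = q then M.pathProb σ d0 i qs as else 0

/-- The probability mass that a (sub)distribution assigns to a set `T`. -/
noncomputable def mass (d : Q → ℝ) (T : Set Q) : ℝ := ∑ q, T.indicator d q

/-- The support of a (sub)distribution. -/
def supp {α : Type} (d : α → ℝ) : Set α := {q | 0 < d q}

/-- One-step sure predecessors of `Y`. -/
def Pre (M : MDP Q A) (Y : Set Q) : Set Q :=
  {q | ∃ a, ∀ q', 0 < M.δ q a q' → q' ∈ Y}

/-- Probability of reaching `T` within `i` steps. -/
noncomputable def reachProb (M : MDP Q A) (σ : List (Q × A) → Q → A → ℝ)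
    (d0 : Q → ℝ) (T : Set Q) (i : ℕ) : ℝ :=
  ∑ qs : Fin (i + 1) → Q, ∑ as : Fin i → A,
    if ∃ j, qs j ∈ T then M.pathProb σ d0 i qs as else 0

/-- `d0` is almost-sure winning for the reachability objective `◇T`:
some strategy reaches `T` with probability one. -/
def ASReach (M : MDP Q A) (d0 : Q → ℝ) (T : Set Q) : Prop :=
  ∃ σ, IsStrategy σ ∧ (⨆ i : ℕ, M.reachProb σ d0 T i) = 1

/-- `d0` is limit-sure eventually synchronizing in `T`. -/
def LimitSureEventually (M : MDP Q A) (d0 : Q → ℝ) (T : Set Q) : Prop :=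
  ∀ ε > (0 : ℝ), ∃ σ, IsStrategy σ ∧ ∃ i, 1 - ε ≤ mass (M.stepDist σ d0 i) T

/-- `d0` is almost-sure weakly synchronizing in `T`. -/
def ASWeakly (M : MDP Q A) (d0 : Q → ℝ) (T : Set Q) : Prop :=
  ∃ σ, IsStrategy σ ∧ ∀ ε > (0 : ℝ), {i : ℕ | 1 - ε ≤ mass (M.stepDist σ d0 i) T}.Infinite

/-- `d0` is almost-sure strongly synchronizing in `T`. -/
def ASStrongly (M : MDP Q A) (d0 : Q → ℝ) (T : Set Q) : Prop :=
  ∃ σ, IsStrategy σ ∧ ∀ ε > (0 : ℝ), ∃ N, ∀ i ≥ N, 1 - ε ≤ mass (M.stepDist σ d0 i) T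

/-- The uniform distribution on a set `S`. -/
noncomputable def uniformOn (S : Set Q) : Q → ℝ :=
  fun q => if q ∈ S then 1 / (S.ncard : ℝ) else 0

/-- The uniform strategy, playing all actions uniformly at random. -/
noncomputable def uniformStrategy (Q A : Type) [Fintype A] :
    List (Q × A) → Q → A → ℝ :=
  fun _ _ _ => 1 / (Fintype.card A : ℝ)

/-- Action `a` is allowed in `q` w.r.t. `S` if all its successors stay in `S`. -/
def Allowed (M : MDP Q A) (S : Set Q) (q : Q) (a : A) : Prop :=
  ∀ q', 0 < M.δ q a q' → q' ∈ S

/-- Edge relation within `S` given the allowed actions. -/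
def ECEdge (M : MDP Q A) (S : Set Q) (q q' : Q) : Prop :=
  q ∈ S ∧ q' ∈ S ∧ ∃ a, M.Allowed S q a ∧ 0 < M.δ q a q'

/-- `S` is an end-component: closed and strongly connected via allowed actions. -/
def IsEC (M : MDP Q A) (S : Set Q) : Prop :=
  (∀ q ∈ S, ∃ a, M.Allowed S q a) ∧
  ∀ q ∈ S, ∀ q' ∈ S, Relation.ReflTransGen (M.ECEdge S) q q'

/-- The union of all end-components. -/
def ECUnion (M : MDP Q A) : Set Q := ⋃₀ {S | M.IsEC S}

/-- Positive always synchronizing in `T`. -/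
def PosAlways (M : MDP Q A) (d0 : Q → ℝ) (T : Set Q) : Prop :=
  ∃ σ, IsStrategy σ ∧ ∀ i, 0 < mass (M.stepDist σ d0 i) T

/-- Positive eventually synchronizing in `T`. -/
def PosEvent (M : MDP Q A) (d0 : Q → ℝ) (T : Set Q) : Prop :=
  ∃ σ, IsStrategy σ ∧ ∃ i, 0 < mass (M.stepDist σ d0 i) T

/-- Positive weakly synchronizing in `T`. -/
def PosWeakly (M : MDP Q A) (d0 : Q → ℝ) (T : Set Q) : Prop :=
  ∃ σ, IsStrategy σ ∧ ∀ N, ∃ i ≥ N, 0 < mass (M.stepDist σ d0 i) T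

/-- Positive strongly synchronizing in `T`. -/
def PosStrongly (M : MDP Q A) (d0 : Q → ℝ) (T : Set Q) : Prop :=
  ∃ σ, IsStrategy σ ∧ ∃ N, ∀ i ≥ N, 0 < mass (M.stepDist σ d0 i) T

/-- Bounded always synchronizing in `T`. -/
def BndAlways (M : MDP Q A) (d0 : Q → ℝ) (T : Set Q) : Prop :=
  ∃ σ, IsStrategy σ ∧ ∃ ε > (0 : ℝ), ∀ i, ε < mass (M.stepDist σ d0 i) T

/-- Bounded eventually synchronizing in `T`. -/
def BndEvent (M : MDP Q A) (d0 : Q → ℝ) (T : Set Q) : Prop :=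
  ∃ σ, IsStrategy σ ∧ ∃ ε > (0 : ℝ), ∃ i, ε < mass (M.stepDist σ d0 i) T

/-- Bounded weakly synchronizing in `T`. -/
def BndWeakly (M : MDP Q A) (d0 : Q → ℝ) (T : Set Q) : Prop :=
  ∃ σ, IsStrategy σ ∧ ∃ ε > (0 : ℝ), ∀ N, ∃ i ≥ N, ε < mass (M.stepDist σ d0 i) T

/-- Bounded strongly synchronizing in `T`. -/
def BndStrongly (M : MDP Q A) (d0 : Q → ℝ) (T : Set Q) : Prop :=
  ∃ σ, IsStrategy σ ∧ ∃ ε > (0 : ℝ), ∃ N, ∀ i ≥ N, ε < mass (M.stepDist σ d0 i) T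

end MDP

namespace MDP

variable {Q A : Type} [Fintype Q] [Fintype A]

/-- The joint mass of being in `q` at step `i` and playing `a`. -/
noncomputable def joint (M : MDP Q A) (σ : List (Q × A) → Q → A → ℝ)
    (d0 : Q → ℝ) (i : ℕ) (q : Q) (a : A) : ℝ :=
  ∑ qs : Fin (i + 1) → Q, ∑ as : Fin i → A,
    if qs (Fin.last i) = q then M.pathProb σ d0 i qs as *
      σ (List.ofFn (fun k : Fin i => (qs k.castSucc, as k))) q a else 0

lemma pathProb_snoc (M : MDP Q A) (σ : List (Q × A) → Q → A → ℝ)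
    (d0 : Q → ℝ) (i : ℕ) (qs : Fin (i + 1) → Q) (as : Fin i → A) (q' : Q) (a : A) :
    M.pathProb σ d0 (i+1) (Fin.snoc (α := fun _ => Q) qs q') (Fin.snoc (α := fun _ => A) as a) =
      M.pathProb σ d0 i qs as *
        (σ (List.ofFn (fun k : Fin i => (qs k.castSucc, as k))) (qs (Fin.last i)) a *
          M.δ (qs (Fin.last i)) a q') := by
  unfold pathProb
  rw [Fin.prod_univ_castSucc, ← mul_assoc]
  have key : ∀ (k : ℕ) (hk : k < i + 2) (hk' : k < i + 1),
      (Fin.snoc (α := fun _ => Q) qs q' : Fin (i+2) → Q) ⟨k, hk⟩ = qs ⟨k, hk'⟩ := by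
    intro k hk hk'
    exact Fin.snoc_castSucc (α := fun _ => Q) (x := q') (p := qs) (i := ⟨k, hk'⟩)
  have keya : ∀ (k : ℕ) (hk : k < i + 1) (hk' : k < i),
      (Fin.snoc (α := fun _ => A) as a : Fin (i+1) → A) ⟨k, hk⟩ = as ⟨k, hk'⟩ := by
    intro k hk hk'
    exact Fin.snoc_castSucc (α := fun _ => A) (x := a) (p := as) (i := ⟨k, hk'⟩)
  refine congrArg₂ (· * ·) ?_ ?_
  · refine congrArg₂ (· * ·) ?_ ?_
    · exact congrArg d0 (key 0 (by omega) (by omega))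
    · apply Finset.prod_congr rfl
      intro j _
      have hj := j.isLt
      have e1 : (Fin.snoc (α := fun _ => Q) qs q' : Fin (i+2) → Q) j.castSucc.castSucc
          = qs j.castSucc := key j.val _ (by omega)
      have e2 : (Fin.snoc (α := fun _ => Q) qs q' : Fin (i+2) → Q) j.castSucc.succ
          = qs j.succ := key (j.val+1) _ (by omega)
      have e3 : (Fin.snoc (α := fun _ => A) as a : Fin (i+1) → A) j.castSucc = as j :=
        keya j.val _ hj
      rw [e1, e2, e3]
      congr 2
      congr 1
      funext k
      have hk : k.val < j.val := k.isLt
      exact Prod.ext (key k.val _ (by omega)) (keya k.val _ (by omega))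
  · have e1 : (Fin.snoc (α := fun _ => Q) qs q' : Fin (i+2) → Q) (Fin.last i).castSucc
          = qs (Fin.last i) := key i _ (by omega)
    have e2 : (Fin.snoc (α := fun _ => Q) qs q' : Fin (i+2) → Q) (Fin.last i).succ
          = q' := by rw [Fin.succ_last]; exact Fin.snoc_last (α := fun _ => Q) q' qs
    have e3 : (Fin.snoc (α := fun _ => A) as a : Fin (i+1) → A) (Fin.last i) = a :=
      Fin.snoc_last (α := fun _ => A) a as
    rw [e1, e2, e3]
    congr 2
    congr 1
    funext k
    have hk : k.val < i := k.isLt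
    exact Prod.ext (key k.val _ (by omega)) (keya k.val _ (by omega))

lemma sum_snoc {X : Type} [Fintype X] (i : ℕ) (g : (Fin (i+1) → X) → ℝ) :
    ∑ f, g f = ∑ f : Fin i → X, ∑ x, g (Fin.snoc (α := fun _ => X) f x) := by
  rw [← Equiv.sum_comp (Fin.snocEquiv (fun _ : Fin (i+1) => X)), Fintype.sum_prod_type,
    Finset.sum_comm]
  rfl

lemma stepDist_zero (M : MDP Q A) (σ : List (Q × A) → Q → A → ℝ) (d0 : Q → ℝ) :
    M.stepDist σ d0 0 = d0 := by
  funext q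
  unfold stepDist
  rw [sum_snoc]
  simp only [Fintype.sum_unique, pathProb, Finset.univ_eq_empty, Finset.prod_empty, mul_one]
  have : ∀ x : Q, ∀ p : Fin 0 → Q, (Fin.snoc (α := fun _ => Q) p x : Fin 1 → Q) 0 = x :=
    fun x p => Fin.snoc_last (α := fun _ => Q) x p
  simp [this]

lemma stepDist_succ (M : MDP Q A) (σ : List (Q × A) → Q → A → ℝ) (d0 : Q → ℝ) (i : ℕ) (q' : Q) :
    M.stepDist σ d0 (i+1) q' = ∑ q, ∑ a, M.joint σ d0 i q a * M.δ q a q' := by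
  have h1 : M.stepDist σ d0 (i+1) q' = ∑ qs : Fin (i + 1) → Q, ∑ as : Fin i → A, ∑ a,
      M.pathProb σ d0 i qs as *
        (σ (List.ofFn (fun k : Fin i => (qs k.castSucc, as k))) (qs (Fin.last i)) a *
          M.δ (qs (Fin.last i)) a q') := by
    unfold stepDist
    rw [sum_snoc]
    apply Finset.sum_congr rfl
    intro qs _
    have : ∀ x, (Fin.snoc (α := fun _ => Q) qs x : Fin (i+2) → Q) (Fin.last (i+1)) = x :=
      fun x => Fin.snoc_last (α := fun _ => Q) x qs
    simp only [this]
    rw [Finset.sum_eq_single q']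
    · rw [sum_snoc]
      simp only [pathProb_snoc, if_true]
    · intro b _ hb
      simp [hb]
    · simp
  rw [h1]
  unfold joint
  simp only [Finset.sum_mul]
  have h2 : ∀ q, ∑ a, ∑ qs : Fin (i + 1) → Q, ∑ as : Fin i → A,
      (if qs (Fin.last i) = q then M.pathProb σ d0 i qs as *
      σ (List.ofFn (fun k : Fin i => (qs k.castSucc, as k))) q a else 0) * M.δ q a q' =
      ∑ qs : Fin (i + 1) → Q, if qs (Fin.last i) = q then ∑ as : Fin i → A, ∑ a,
        M.pathProb σ d0 i qs as *
        (σ (List.ofFn (fun k : Fin i => (qs k.castSucc, as k))) (qs (Fin.last i)) a *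
          M.δ (qs (Fin.last i)) a q') else 0 := by
    intro q
    rw [Finset.sum_comm]
    apply Finset.sum_congr rfl
    intro qs _
    rw [Finset.sum_comm]
    split_ifs with h
    · subst h
      simp [mul_assoc]
    · simp
  refine Eq.trans ?_ (Finset.sum_congr rfl fun q _ => (h2 q).symm)
  refine Eq.trans ?_ Finset.sum_comm
  simp

lemma joint_nonneg (M : MDP Q A) {σ : List (Q × A) → Q → A → ℝ} (hσ : IsStrategy σ)
    {d0 : Q → ℝ} (hd : ∀ q, 0 ≤ d0 q) (i : ℕ) (q : Q) (a : A) : 0 ≤ M.joint σ d0 i q a := by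
  unfold joint
  refine Finset.sum_nonneg fun qs _ => Finset.sum_nonneg fun as _ => ?_
  split_ifs
  · refine mul_nonneg ?_ (hσ.1 _ _ _)
    exact mul_nonneg (hd _) (Finset.prod_nonneg fun j _ =>
      mul_nonneg (hσ.1 _ _ _) (M.δ_nonneg _ _ _))
  · exact le_rfl

lemma joint_sum (M : MDP Q A) {σ : List (Q × A) → Q → A → ℝ} (hσ : IsStrategy σ)
    (d0 : Q → ℝ) (i : ℕ) (q : Q) : ∑ a, M.joint σ d0 i q a = M.stepDist σ d0 i q := by
  unfold joint stepDist
  rw [Finset.sum_comm]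
  apply Finset.sum_congr rfl
  intro qs _
  rw [Finset.sum_comm]
  apply Finset.sum_congr rfl
  intro as _
  split_ifs
  · rw [← Finset.mul_sum, hσ.2, mul_one]
  · simp

/-- The Markov deterministic strategy. -/
noncomputable def markov (f : ℕ → Q → A) : List (Q × A) → Q → A → ℝ :=
  fun h q a => if a = f h.length q then 1 else 0

lemma markov_isStrategy (f : ℕ → Q → A) : IsStrategy (markov f) := by
  refine ⟨fun h q a => ?_, fun h q => ?_⟩
  · unfold markov; split_ifs <;> norm_num
  · simp [markov]

/-- Push forward a distribution along a decision rule. -/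
noncomputable def push (M : MDP Q A) (d : Q → ℝ) (f : Q → A) : Q → ℝ :=
  fun q' => ∑ q, d q * M.δ q (f q) q'

lemma stepDist_markov_succ (M : MDP Q A) (f : ℕ → Q → A) (d0 : Q → ℝ) (i : ℕ) :
    M.stepDist (markov f) d0 (i+1) = M.push (M.stepDist (markov f) d0 i) (f i) := by
  funext q'
  rw [stepDist_succ]
  unfold push
  apply Finset.sum_congr rfl
  intro q _
  have : ∀ a, M.joint (markov f) d0 i q a =
      if a = f i q then M.stepDist (markov f) d0 i q else 0 := by
    intro a
    unfold joint stepDist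
    split_ifs with h
    · simp [markov, h]
    · simp [markov, h]
  simp [this]

/-- Iterated push. -/
noncomputable def run (M : MDP Q A) (d : Q → ℝ) (l : List (Q → A)) : Q → ℝ :=
  l.foldl M.push d

lemma stepDist_markov (M : MDP Q A) (f : ℕ → Q → A) (d0 : Q → ℝ) (i : ℕ) :
    M.stepDist (markov f) d0 i = M.run d0 ((List.range i).map f) := by
  induction i with
  | zero => simp [stepDist_zero, run]
  | succ n ih =>
    rw [stepDist_markov_succ, ih, List.range_succ]
    simp [run]

end MDP
namespace MDP

variable {Q A : Type} [Fintype Q] [Fintype A]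

/-- Expected value of `w` after playing `a` in `q`. -/
noncomputable def ev (M : MDP Q A) (w : Q → ℝ) (q : Q) (a : A) : ℝ := ∑ q', M.δ q a q' * w q'

lemma ev_mono (M : MDP Q A) {w w' : Q → ℝ} {q : Q} {a : A}
    (h : ∀ q', 0 < M.δ q a q' → w q' ≤ w' q') : M.ev w q a ≤ M.ev w' q a := by
  refine Finset.sum_le_sum fun q' _ => ?_
  rcases (M.δ_nonneg q a q').eq_or_lt with h0 | h0
  · simp [← h0]
  · exact mul_le_mul_of_nonneg_left (h q' h0) h0.le

lemma ev_affine (M : MDP Q A) (x y : ℝ) (w : Q → ℝ) (q : Q) (a : A) :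
    M.ev (fun q' => x + y * w q') q a = x + y * M.ev w q a := by
  unfold ev
  simp only [mul_add, Finset.sum_add_distrib, ← Finset.sum_mul, M.δ_sum, one_mul]
  rw [Finset.mul_sum]
  congr 1
  exact Finset.sum_congr rfl fun _ _ => by ring

lemma ev_const (M : MDP Q A) (x : ℝ) (q : Q) (a : A) :
    M.ev (fun _ => x) q a = x := by
  unfold ev
  rw [← Finset.sum_mul, M.δ_sum, one_mul]

lemma exists_gap (M : MDP Q A) : ∃ κ > (0:ℝ), ∀ q a q', 0 < M.δ q a q' → κ ≤ M.δ q a q' := by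
  have : ∀ x : Q × A × Q, ∃ κ > (0:ℝ), 0 < M.δ x.1 x.2.1 x.2.2 → κ ≤ M.δ x.1 x.2.1 x.2.2 := by
    intro x
    by_cases h : 0 < M.δ x.1 x.2.1 x.2.2
    · exact ⟨_, h, fun _ => le_rfl⟩
    · exact ⟨1, one_pos, fun h' => absurd h' h⟩
  choose g hg hg' using this
  rcases isEmpty_or_nonempty (Q × A × Q) with he | he
  · exact ⟨1, one_pos, fun q a q' => (he.false (q, a, q')).elim⟩
  · obtain ⟨x0, hx0⟩ := Finite.exists_min g
    exact ⟨g x0, hg x0, fun q a q' h => (hx0 (q, a, q')).trans (hg' (q, a, q') h)⟩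

lemma ev_loss (M : MDP Q A) {w : Q → ℝ} (hw : ∀ q, w q ≤ 1) {q : Q} {a : A} {q' : Q} {κ η : ℝ}
    (hκ : κ ≤ M.δ q a q') (hη : 0 ≤ η) (h : w q' ≤ 1 - η) :
    M.ev w q a ≤ 1 - κ * η := by
  have h1 : M.ev w q a ≤ ∑ x, (M.δ q a x - if x = q' then M.δ q a q' * η else 0) := by
    refine Finset.sum_le_sum fun x _ => ?_
    have := M.δ_nonneg q a x
    split_ifs with hx
    · subst hx; nlinarith
    · nlinarith [hw x]
  rw [Finset.sum_sub_distrib, M.δ_sum] at h1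
  simp at h1
  nlinarith

/-- `h` is the value function of the optimal control problem with terminal reward `w0`
and allowed actions `Al`; `F` is an optimal policy (indexed by remaining steps). -/
structure Opt (M : MDP Q A) (Al : ℕ → Q → A → Prop) (w0 : Q → ℝ) (h : ℕ → Q → ℝ)
    (F : ℕ → Q → A) : Prop where
  zero : h 0 = w0
  al : ∀ n q, Al n q (F n q)
  eq : ∀ n q, h (n+1) q = M.ev (h n) q (F n q)
  le : ∀ n q a, Al n q a → M.ev (h n) q a ≤ h (n+1) q

lemma exists_opt (M : MDP Q A) (Al : ℕ → Q → A → Prop) (hAl : ∀ n q, ∃ a, Al n q a)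
    (w0 : Q → ℝ) : ∃ h F, M.Opt Al w0 h F := by
  have key : ∀ (n : ℕ) (w : Q → ℝ) (q : Q), ∃ a, Al n q a ∧ ∀ b, Al n q b → M.ev w q b ≤ M.ev w q a := by
    intro n w q
    obtain ⟨a, ha, ha'⟩ := Set.exists_max_image {a | Al n q a} (fun a => M.ev w q a)
      (Set.toFinite _) (hAl n q)
    exact ⟨a, ha, ha'⟩
  choose G hG hG' using key
  let h : ℕ → Q → ℝ := fun n => Nat.rec w0 (fun n w q => M.ev w q (G n w q)) n
  exact ⟨h, fun n => G n (h n), rfl, fun n q => hG _ _ _, fun n q => rfl, fun n q a ha => hG' _ _ _ _ ha⟩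

lemma Opt.nonneg {M : MDP Q A} {Al : ℕ → Q → A → Prop} {w0 h F} (H : M.Opt Al w0 h F)
    (hw : ∀ q, 0 ≤ w0 q) (n : ℕ) (q : Q) : 0 ≤ h n q := by
  induction n generalizing q with
  | zero => rw [H.zero]; exact hw q
  | succ n ih =>
    rw [H.eq, ← M.ev_const 0 q (F n q)]
    exact M.ev_mono fun q' _ => ih q'

lemma Opt.le_one {M : MDP Q A} {Al : ℕ → Q → A → Prop} {w0 h F} (H : M.Opt Al w0 h F)
    (hw : ∀ q, w0 q ≤ 1) (n : ℕ) (q : Q) : h n q ≤ 1 := by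
  induction n generalizing q with
  | zero => rw [H.zero]; exact hw q
  | succ n ih =>
    rw [H.eq, ← M.ev_const 1 q (F n q)]
    exact M.ev_mono fun q' _ => ih q'

/-- All actions allowed. -/
def AllAl : ℕ → Q → A → Prop := fun _ _ _ => True

/-- indicator -/
noncomputable def ind (S : Set Q) : Q → ℝ := fun q => if q ∈ S then 1 else 0

lemma ind_nonneg (S : Set Q) (q : Q) : 0 ≤ ind S q := by unfold ind; split_ifs <;> norm_num
lemma ind_le_one (S : Set Q) (q : Q) : ind S q ≤ 1 := by unfold ind; split_ifs <;> norm_num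

lemma mass_eq (d : Q → ℝ) (S : Set Q) : mass d S = ∑ q, d q * ind S q := by
  unfold mass ind
  refine Finset.sum_congr rfl fun q _ => ?_
  by_cases h : q ∈ S <;> simp [h]

lemma Opt.upper {M : MDP Q A} {w0 w1 v u F G} (Hv : M.Opt AllAl w0 v F) (Hu : M.Opt AllAl w1 u G)
    {κ : ℝ} (hκ : 0 ≤ κ) {k : ℕ} (h0 : ∀ q, v k q ≤ 1 - κ * (1 - u 0 q)) (n : ℕ) (q : Q) :
    v (k + n) q ≤ 1 - κ * (1 - u n q) := by
  induction n generalizing q with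
  | zero => exact h0 q
  | succ n ih =>
    rw [← add_assoc, Hv.eq]
    have h1 : M.ev (v (k+n)) q (F (k+n) q) ≤ M.ev (fun q' => (1 - κ) + κ * u n q') q (F (k+n) q) :=
      M.ev_mono fun q' _ => by linarith [ih q']
    rw [ev_affine] at h1
    have h2 := Hu.le n q (F (k+n) q) trivial
    nlinarith

lemma Opt.lower {M : MDP Q A} {w0 w1 v u F G} (Hv : M.Opt AllAl w0 v F) (Hu : M.Opt AllAl w1 u G)
    {ε : ℝ} {k : ℕ} (h0 : ∀ q, u 0 q - ε ≤ v k q) (n : ℕ) (q : Q) :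
    u n q - ε ≤ v (k + n) q := by
  induction n generalizing q with
  | zero => exact h0 q
  | succ n ih =>
    rw [← add_assoc, Hu.eq]
    have h1 : M.ev (fun q' => (-ε) + 1 * u n q') q (G n q) ≤ M.ev (v (k+n)) q (G n q) :=
      M.ev_mono fun q' _ => by linarith [ih q']
    rw [ev_affine] at h1
    have h2 := Hv.le (k+n) q (G n q) trivial
    linarith

lemma stepDist_nonneg (M : MDP Q A) {σ : List (Q × A) → Q → A → ℝ} (hσ : IsStrategy σ)
    {d0 : Q → ℝ} (hd : ∀ q, 0 ≤ d0 q) (i : ℕ) (q : Q) : 0 ≤ M.stepDist σ d0 i q := by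
  rw [← M.joint_sum hσ]
  exact Finset.sum_nonneg fun a _ => M.joint_nonneg hσ hd i q a

lemma sum_stepDist_succ (M : MDP Q A) (σ : List (Q × A) → Q → A → ℝ) (d0 : Q → ℝ) (i : ℕ)
    (w : Q → ℝ) : ∑ q, M.stepDist σ d0 (i+1) q * w q = ∑ q, ∑ a, M.joint σ d0 i q a * M.ev w q a := by
  simp only [stepDist_succ, Finset.sum_mul, ev, Finset.mul_sum]
  rw [Finset.sum_comm]
  refine Finset.sum_congr rfl fun q _ => ?_
  rw [Finset.sum_comm]
  exact Finset.sum_congr rfl fun a _ => Finset.sum_congr rfl fun _ _ => by ring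

lemma stepDist_isDist (M : MDP Q A) {σ : List (Q × A) → Q → A → ℝ} (hσ : IsStrategy σ)
    {d0 : Q → ℝ} (hd : IsDist d0) (i : ℕ) : IsDist (M.stepDist σ d0 i) := by
  refine ⟨M.stepDist_nonneg hσ hd.1 i, ?_⟩
  induction i with
  | zero => rw [stepDist_zero]; exact hd.2
  | succ n ih =>
    have := M.sum_stepDist_succ σ d0 n (fun _ => 1)
    simp only [ev_const, mul_one, M.joint_sum hσ] at this
    rw [this, ih]

lemma value_bound (M : MDP Q A) {σ : List (Q × A) → Q → A → ℝ} (hσ : IsStrategy σ)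
    {d0 : Q → ℝ} (hd : ∀ q, 0 ≤ d0 q) {w0 v F} (Hv : M.Opt AllAl w0 v F) (n m : ℕ) :
    ∑ q, M.stepDist σ d0 (n+m) q * w0 q ≤ ∑ q, M.stepDist σ d0 n q * v m q := by
  induction m generalizing n with
  | zero => rw [Hv.zero]; exact le_rfl
  | succ m ih =>
    have h1 := ih (n+1)
    rw [show n + (m+1) = n + 1 + m by ring]
    refine h1.trans ?_
    rw [sum_stepDist_succ]
    refine Finset.sum_le_sum fun q _ => ?_
    rw [← M.joint_sum hσ, Finset.sum_mul]
    exact Finset.sum_le_sum fun a _ => mul_le_mul_of_nonneg_left (Hv.le m q a trivial)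
      (M.joint_nonneg hσ hd n q a)

/-- list of decision rules for the last `n` steps -/
def pol (F : ℕ → Q → A) : ℕ → List (Q → A)
  | 0 => []
  | n+1 => F n :: pol F n

lemma pol_length (F : ℕ → Q → A) (n : ℕ) : (pol F n).length = n := by
  induction n with
  | zero => rfl
  | succ n ih => simp [pol, ih]

lemma sum_push (M : MDP Q A) (d : Q → ℝ) (f : Q → A) (w : Q → ℝ) :
    ∑ q, M.push d f q * w q = ∑ q, d q * M.ev w q (f q) := by
  simp only [push, Finset.sum_mul, ev, Finset.mul_sum]
  rw [Finset.sum_comm]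
  exact Finset.sum_congr rfl fun a _ => Finset.sum_congr rfl fun _ _ => by ring

lemma push_nonneg (M : MDP Q A) {d : Q → ℝ} (hd : ∀ q, 0 ≤ d q) (f : Q → A) (q : Q) :
    0 ≤ M.push d f q :=
  Finset.sum_nonneg fun x _ => mul_nonneg (hd x) (M.δ_nonneg _ _ _)

lemma push_isDist (M : MDP Q A) {d : Q → ℝ} (hd : IsDist d) (f : Q → A) : IsDist (M.push d f) := by
  refine ⟨M.push_nonneg hd.1 f, ?_⟩
  have := M.sum_push d f (fun _ => 1)
  simp only [ev_const, mul_one] at this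
  rw [this, hd.2]

lemma run_isDist (M : MDP Q A) {d : Q → ℝ} (hd : IsDist d) (l : List (Q → A)) :
    IsDist (M.run d l) := by
  induction l generalizing d with
  | nil => exact hd
  | cons f l ih => exact ih (M.push_isDist hd f)

lemma run_append (M : MDP Q A) (d : Q → ℝ) (l l' : List (Q → A)) :
    M.run d (l ++ l') = M.run (M.run d l) l' := by
  simp [run]

lemma run_pol_value (M : MDP Q A) {F : ℕ → Q → A} {H : ℕ → Q → ℝ} 
    (h : ∀ n q, H (n+1) q ≤ M.ev (H n) q (F n q)) (n : ℕ) {d : Q → ℝ} (hd : ∀ q, 0 ≤ d q) :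
    ∑ q, d q * H n q ≤ ∑ q, M.run d (pol F n) q * H 0 q := by
  induction n generalizing d with
  | zero => exact le_rfl
  | succ n ih =>
    refine le_trans ?_ (ih (M.push_nonneg hd (F n)))
    rw [sum_push]
    exact Finset.sum_le_sum fun q _ => mul_le_mul_of_nonneg_left (h n q) (hd q)

lemma run_pol_supp (M : MDP Q A) {F : ℕ → Q → A} {I : ℕ → Set Q} 
    (n : ℕ) (h : ∀ m < n, ∀ q ∈ I (m+1), ∀ q', 0 < M.δ q (F m q) q' → q' ∈ I m)
    {d : Q → ℝ} (hd : ∀ q, 0 ≤ d q)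
    (hI : ∀ q, 0 < d q → q ∈ I n) : ∀ q, 0 < M.run d (pol F n) q → q ∈ I 0 := by
  induction n generalizing d with
  | zero => exact hI
  | succ n ih =>
    refine ih (fun m hm => h m (by omega)) (M.push_nonneg hd (F n)) ?_
    intro q' hq'
    obtain ⟨q, -, hq⟩ := Finset.exists_ne_zero_of_sum_ne_zero (ne_of_gt hq')
    have h1 : 0 < d q := lt_of_le_of_ne (hd q) (fun h => hq (by rw [← h, zero_mul]))
    have h2 : 0 < M.δ q (F n q) q' :=
      lt_of_le_of_ne (M.δ_nonneg _ _ _) (fun h => hq (by rw [← h, mul_zero]))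
    exact h n (by omega) q (hI q h1) q' h2

lemma exists_seq_of_list {α : Type} [Nonempty α] (l : List α) :
    ∃ f : ℕ → α, (List.range l.length).map f = l := by
  refine ⟨fun n => l.getD n (Classical.arbitrary α), ?_⟩
  apply List.ext_getElem
  · simp
  · intro i h1 h2
    simp [h2]

lemma pointwise_of_sum {d w : Q → ℝ} (hd : IsDist d) (hw : ∀ q, w q ≤ 1) {ε : ℝ}
    (h : 1 - ε ≤ ∑ q, d q * w q) (q : Q) : d q * (1 - w q) ≤ ε := by
  have h1 : ∑ q, d q * (1 - w q) ≤ ε := by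
    have : ∑ q, d q * (1 - w q) = 1 - ∑ q, d q * w q := by
      simp only [mul_sub, mul_one, Finset.sum_sub_distrib, hd.2]
    linarith
  exact (Finset.single_le_sum (f := fun q => d q * (1 - w q))
    (fun i _ => mul_nonneg (hd.1 i) (by linarith [hw i])) (Finset.mem_univ q)).trans h1

lemma sum_of_pointwise {d w : Q → ℝ} (hd : IsDist d) {ε : ℝ}
    (h : ∀ q, 0 < d q → 1 - ε ≤ w q) : 1 - ε ≤ ∑ q, d q * w q := by
  have : 1 - ε = ∑ q, d q * (1 - ε) := by rw [← Finset.sum_mul, hd.2, one_mul]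
  rw [this]
  refine Finset.sum_le_sum fun q _ => ?_
  rcases (hd.1 q).eq_or_lt with h0 | h0
  · simp [← h0]
  · exact mul_le_mul_of_nonneg_left (h q h0) h0.le

lemma exists_min_pos (d : Q → ℝ) : ∃ c > (0:ℝ), ∀ q, 0 < d q → c ≤ d q := by
  rcases isEmpty_or_nonempty Q with he | he
  · exact ⟨1, one_pos, fun q => he.elim q⟩
  · obtain ⟨x0, hx0⟩ := Finite.exists_min (fun q => if 0 < d q then d q else 1)
    refine ⟨if 0 < d x0 then d x0 else 1, by split_ifs with h <;> [exact h; norm_num], fun q hq => ?_⟩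
    simpa [hq] using hx0 q

lemma ls_iff (M : MDP Q A) [Nonempty A] {d : Q → ℝ} (hd : IsDist d) {S : Set Q} {v F}
    (Hv : M.Opt AllAl (ind S) v F) :
    M.LimitSureEventually d S ↔ ∀ ε > (0:ℝ), ∃ n, ∀ q, 0 < d q → 1 - ε ≤ v n q := by
  constructor
  · intro h ε hε
    obtain ⟨c, hc, hc'⟩ := exists_min_pos d
    obtain ⟨σ, hσ, i, hi⟩ := h (c * ε) (by positivity)
    refine ⟨i, fun q hq => ?_⟩
    rw [mass_eq] at hi
    have h1 := M.value_bound hσ hd.1 Hv 0 i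
    rw [zero_add, stepDist_zero] at h1
    have h2 := pointwise_of_sum hd (Hv.le_one (ind_le_one S) i) (hi.trans h1) q
    have h3 := Hv.le_one (ind_le_one S) i q
    have h4 : c * (1 - v i q) ≤ c * ε :=
      (mul_le_mul_of_nonneg_right (hc' q hq) (by linarith)).trans h2
    have := le_of_mul_le_mul_left h4 hc
    linarith
  · intro h ε hε
    obtain ⟨n, hn⟩ := h ε hε
    obtain ⟨f, hf⟩ := exists_seq_of_list (pol F n)
    refine ⟨markov f, markov_isStrategy f, n, ?_⟩
    rw [pol_length] at hf
    rw [stepDist_markov, hf, mass_eq, ← Hv.zero]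
    exact (sum_of_pointwise hd hn).trans
      (M.run_pol_value (fun n q => (Hv.eq n q).le) n hd.1)

lemma uniformOn_isDist {S : Set Q} (hS : S.Nonempty) : IsDist (uniformOn S) := by
  refine ⟨fun q => ?_, ?_⟩
  · unfold uniformOn; split_ifs <;> positivity
  · unfold uniformOn
    rw [Finset.sum_ite, Finset.sum_const, Finset.sum_const_zero, add_zero, nsmul_eq_mul]
    have : (Finset.univ.filter (· ∈ S)).card = S.ncard := by
      rw [Set.ncard_eq_toFinset_card']; congr 1; ext; simp
    rw [this]
    have h2 : (S.ncard : ℝ) ≠ 0 := by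
      have := (Set.ncard_pos (Set.toFinite S)).2 hS
      positivity
    field_simp

lemma uniformOn_pos {S : Set Q} (q : Q) : 0 < uniformOn S q ↔ q ∈ S := by
  unfold uniformOn
  split_ifs with h
  · have := (Set.ncard_pos (Set.toFinite S)).2 ⟨q, h⟩
    simp only [h, iff_true]; positivity
  · simp [h]

lemma strategy_nonempty {σ : List (Q × A) → Q → A → ℝ} (hσ : IsStrategy σ) (q : Q) : Nonempty A := by
  by_contra h
  rw [not_nonempty_iff] at h
  have := hσ.2 [] q
  simp at this

lemma dist_nonempty {d : Q → ℝ} (hd : IsDist d) : Nonempty Q := by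
  by_contra h
  rw [not_nonempty_iff] at h
  have := hd.2
  simp at this

end MDP
namespace MDP

variable {Q A : Type} [Fintype Q] [Fintype A]

lemma forward (M : MDP Q A) {d0 : Q → ℝ} (hd0 : IsDist d0) {T : Set Q} (h : M.ASWeakly d0 T) :
    ∃ T' ⊆ T, M.LimitSureEventually d0 T' ∧ M.LimitSureEventually (uniformOn T') (M.Pre T') := by
  obtain ⟨σ, hσ, hinf⟩ := h
  have hQ := dist_nonempty hd0
  have hA : Nonempty A := strategy_nonempty hσ (Classical.arbitrary Q)
  set D := M.stepDist σ d0 with hD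
  have hDd : ∀ n, IsDist (D n) := fun n => M.stepDist_isDist hσ hd0 n
  obtain ⟨φ, hφ, hφ'⟩ := Filter.extraction_forall_of_frequently
    (P := fun (n : ℕ) (k : ℕ) => 1 - 1 / ((n:ℝ) + 1) ≤ mass (D k) T)
    (fun n => Nat.frequently_atTop_iff_infinite.2 (hinf _ (by positivity)))
  have hcomp : IsCompact (Set.Icc (0 : Q → ℝ) 1) := isCompact_Icc
  have hmem : ∀ n, D (φ n) ∈ Set.Icc (0 : Q → ℝ) 1 := by
    intro n
    refine ⟨(hDd _).1, fun q => ?_⟩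
    have := Finset.single_le_sum (f := D (φ n)) (fun i _ => (hDd (φ n)).1 i) (Finset.mem_univ q)
    rw [(hDd _).2] at this
    exact this
  obtain ⟨L, -, ψ, hψ, hlim⟩ := hcomp.tendsto_subseq hmem
  have hlimq : ∀ q, Tendsto (fun n => D (φ (ψ n)) q) atTop (nhds (L q)) := by
    intro q
    exact (tendsto_pi_nhds.1 hlim) q
  have hmass : ∀ S : Set Q, Tendsto (fun n => mass (D (φ (ψ n))) S) atTop (nhds (mass L S)) := by
    intro S
    simp only [mass_eq]
    exact tendsto_finsetSum _ fun q _ => (hlimq q).mul_const _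
  have hL0 : ∀ q, 0 ≤ L q := fun q => ge_of_tendsto' (hlimq q) fun n => (hDd _).1 q
  have hL1 : ∑ q, L q = 1 := by
    have h1 : Tendsto (fun n => ∑ q, D (φ (ψ n)) q) atTop (nhds (∑ q, L q)) :=
      tendsto_finsetSum _ fun q _ => hlimq q
    simp only [(hDd _).2] at h1
    exact tendsto_nhds_unique h1 tendsto_const_nhds
  have hLT : 1 ≤ mass L T := by
    have h1 : Tendsto (fun n : ℕ => 1 - 1 / ((n:ℝ) + 1)) atTop (nhds (1 - 0)) :=
      tendsto_const_nhds.sub tendsto_one_div_add_atTop_nhds_zero_nat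
    rw [sub_zero] at h1
    exact le_of_tendsto_of_tendsto' (h1.comp hψ.tendsto_atTop) (hmass T) fun n => hφ' (ψ n)
  have hLd : IsDist L := ⟨hL0, hL1⟩
  set T' : Set Q := {q | 0 < L q} with hT'
  have hsub : T' ⊆ T := by
    intro q hq
    by_contra hqT
    rw [mass_eq] at hLT
    have := pointwise_of_sum (ε := 0) hLd (ind_le_one T) (by linarith) q
    simp [ind, hqT] at this
    exact absurd hq (not_lt.2 this)
  have hLT' : mass L T' = 1 := by
    rw [mass_eq, ← hL1]
    refine Finset.sum_congr rfl fun q _ => ?_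
    by_cases hq : 0 < L q
    · simp [ind, hT', hq]
    · have : L q = 0 := le_antisymm (not_lt.1 hq) (hL0 q)
      simp [this]
  have hev : ∀ ε > (0:ℝ), ∀ᶠ n in atTop, 1 - ε ≤ mass (D (φ (ψ n))) T' := by
    intro ε hε
    have := (hmass T').eventually (lt_mem_nhds (a := 1 - ε) (by rw [hLT']; linarith))
    exact this.mono fun n hn => hn.le
  refine ⟨T', hsub, ?_, ?_⟩
  · intro ε hε
    obtain ⟨n, hn⟩ := (hev ε hε).exists
    exact ⟨σ, hσ, _, hn⟩
  have hne : T'.Nonempty := by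
    by_contra hne
    rw [Set.not_nonempty_iff_eq_empty] at hne
    rw [hne] at hLT'
    simp [mass] at hLT'
  obtain ⟨v, F, Hv⟩ := M.exists_opt AllAl (fun _ _ => ⟨Classical.arbitrary A, trivial⟩) (ind T')
  obtain ⟨u, G, Hu⟩ := M.exists_opt AllAl (fun _ _ => ⟨Classical.arbitrary A, trivial⟩) (ind (M.Pre T'))
  rw [M.ls_iff (uniformOn_isDist hne) Hu]
  obtain ⟨κ, hκ, hκ'⟩ := M.exists_gap
  have hcmp := Hv.upper Hu hκ.le (k := 1) (by
    intro q
    rw [Hu.zero]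
    by_cases hq : q ∈ M.Pre T'
    · simp [ind, hq]
      exact Hv.le_one (ind_le_one _) _ _
    · have h1 : ∃ q', 0 < M.δ q (F 0 q) q' ∧ q' ∉ T' := by
        by_contra hcon
        push Not at hcon
        exact hq ⟨_, hcon⟩
      obtain ⟨q', h1, h2⟩ := h1
      have := M.ev_loss (w := v 0) (η := 1) (Hv.le_one (ind_le_one _) 0) (hκ' _ _ _ h1) (by norm_num)
        (by rw [Hv.zero]; simp [ind, h2])
      rw [← Hv.eq] at this
      simpa [ind, hq] using this)
  intro ε hε
  obtain ⟨c, hc, hc'⟩ := exists_min_pos L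
  have hbig : ∀ᶠ n in atTop, ∀ q, 0 < L q → c / 2 ≤ D (φ (ψ n)) q := by
    rw [Filter.eventually_all]
    intro q
    by_cases hq : 0 < L q
    · have := (hlimq q).eventually (lt_mem_nhds (a := c / 2) (by linarith [hc' q hq]))
      exact this.mono fun n hn _ => hn.le
    · exact Filter.Eventually.of_forall fun n h => absurd h hq
  obtain ⟨k, hk⟩ := hbig.exists
  obtain ⟨l, hl, hkl⟩ := ((hev (c / 2 * (κ * ε)) (by positivity)).and (eventually_gt_atTop k)).exists
  have hlt : φ (ψ k) < φ (ψ l) := hφ (hψ hkl)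
  obtain ⟨m, hm⟩ : ∃ m, φ (ψ l) = φ (ψ k) + (1 + m) := ⟨φ (ψ l) - φ (ψ k) - 1, by omega⟩
  refine ⟨m, fun q hq => ?_⟩
  rw [uniformOn_pos] at hq
  rw [hm, mass_eq] at hl
  have h1 := M.value_bound hσ hd0.1 Hv (φ (ψ k)) (1 + m)
  have h2 := pointwise_of_sum (hDd _) (Hv.le_one (ind_le_one _) (1+m)) (hl.trans h1) q
  have h3 := Hv.le_one (ind_le_one _) (1+m) q
  have h4 : c / 2 * (1 - v (1+m) q) ≤ c / 2 * (κ * ε) :=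
    (mul_le_mul_of_nonneg_right (hk q hq) (by linarith)).trans h2
  have h5 := le_of_mul_le_mul_left h4 (by positivity)
  have h6 := hcmp m q
  have h7 : κ * (1 - u m q) ≤ κ * ε := by linarith
  have := le_of_mul_le_mul_left h7 hκ
  linarith

end MDP
namespace MDP

variable {Q A : Type} [Fintype Q] [Fintype A]

lemma Opt.one_succ {M : MDP Q A} {w0 v F} (H : M.Opt AllAl w0 v F) (hw : ∀ q, w0 q ≤ 1)
    (n : ℕ) (q : Q) : v (n+1) q = 1 ↔ ∃ a, ∀ q', 0 < M.δ q a q' → v n q' = 1 := by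
  constructor
  · intro h
    refine ⟨F n q, fun q' hq' => ?_⟩
    by_contra hne
    have hlt : v n q' < 1 := lt_of_le_of_ne (H.le_one hw n q') hne
    have := M.ev_loss (w := v n) (η := 1 - v n q') (H.le_one hw n)
      (le_refl (M.δ q (F n q) q')) (by linarith) (by linarith)
    rw [← H.eq, h] at this
    have : 0 < M.δ q (F n q) q' * (1 - v n q') := mul_pos hq' (by linarith)
    linarith
  · rintro ⟨a, ha⟩
    refine le_antisymm (H.le_one hw _ _) ?_
    refine le_trans ?_ (H.le n q a trivial)
    rw [← M.ev_const 1 q a]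
    exact M.ev_mono fun q' h => (ha q' h).ge

lemma exists_idem (f : Set Q → Set Q) (S : ℕ → Set Q) (hS : ∀ n, S (n+1) = f (S n)) :
    ∃ r ≥ 1, S (r + r) = S r := by
  obtain ⟨a, b, hab, he⟩ := Finite.exists_ne_map_eq_of_infinite S
  wlog hlt : a < b generalizing a b
  · exact this b a hab.symm he.symm (by omega)
  have h1 : ∀ n, S (a + n) = S (b + n) := by
    intro n
    induction n with
    | zero => exact he
    | succ n ih => rw [← add_assoc, ← add_assoc, hS, hS, ih]
  obtain ⟨p, hp, rfl⟩ : ∃ p, 1 ≤ p ∧ b = a + p := ⟨b - a, by omega, by omega⟩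
  have h2 : ∀ k n, S (a + n) = S (a + n + p * k) := by
    intro k n
    induction k with
    | zero => rfl
    | succ k ih =>
      rw [ih, add_assoc, h1]
      congr 1; ring
  obtain ⟨n, hn⟩ : ∃ n, p * (a + 1) = a + n := ⟨p * (a+1) - a, by
    have : a ≤ p * (a+1) := by nlinarith
    omega⟩
  refine ⟨p * (a + 1), by nlinarith, ?_⟩
  have := h2 (a+1) n
  rw [← hn] at this
  exact this.symm

/-- Uniform positive lower bound for the values below one. -/
lemma exists_below_gap {ι : Type} [Finite ι] (P : ι → ℝ → Prop)
    (hmono : ∀ i x y, x ≤ y → P i y → P i x) (h : ∀ i, ∃ x > (0:ℝ), P i x) :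
    ∃ x > (0:ℝ), ∀ i, P i x := by
  choose g hg hg' using h
  rcases isEmpty_or_nonempty ι with he | he
  · exact ⟨1, one_pos, fun i => he.elim i⟩
  · obtain ⟨i0, hi0⟩ := Finite.exists_min g
    exact ⟨g i0, hg i0, fun i => hmono i _ _ (hi0 i) (hg' i)⟩

lemma core (M : MDP Q A) [Nonempty A] {T' : Set Q} {v F} (Hv : M.Opt AllAl (ind T') v F)
    (hG : ∀ ε > (0:ℝ), ∃ m ≥ 1, ∀ q ∈ T', 1 - ε ≤ v m q) :
    ∃ W : Set Q,
      (∀ ε > (0:ℝ), ∃ l : List (Q → A), l ≠ [] ∧ ∀ d, IsDist d → (∀ q, 0 < d q → q ∈ W) →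
        (∀ q, 0 < M.run d l q → q ∈ W) ∧ 1 - ε ≤ mass (M.run d l) T') ∧
      (∀ d, IsDist d → (∀ ε > (0:ℝ), ∃ n, ∀ q, 0 < d q → 1 - ε ≤ v n q) →
        ∃ l : List (Q → A), ∀ q, 0 < M.run d l q → q ∈ W) := by
  have hv0 := Hv.nonneg (ind_nonneg T')
  have hv1 := Hv.le_one (ind_le_one T')
  obtain ⟨κ, hκ, hκ'⟩ := M.exists_gap
  set S : ℕ → Set Q := fun n => {q | v n q = 1} with hSdef
  have hS : ∀ n, S (n+1) = M.Pre (S n) := by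
    intro n; ext q; exact Hv.one_succ (ind_le_one T') n q
  have hS0 : S 0 = T' := by
    ext q
    change v 0 q = 1 ↔ q ∈ T'
    rw [Hv.zero]; unfold ind
    split_ifs with h <;> simp [h]
  obtain ⟨r, hr, hrr⟩ := exists_idem M.Pre S hS
  have hT : ∀ ε > (0:ℝ), ∃ j, ∀ n q, v n q - ε ≤ v (r + r * j + n) q := by
    intro ε hε
    obtain ⟨m, hm, hm'⟩ := hG (ε / r) (by positivity)
    have h1 : ∀ n q, v n q - ε / r ≤ v (m + n) q := by
      refine Hv.lower Hv (k := m) (fun q => ?_)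
      rw [Hv.zero]
      by_cases hq : q ∈ T'
      · have := hm' q hq; simpa [ind, hq] using this
      · have := hv0 m q
        have : 0 < ε / r := by positivity
        simp [ind, hq]; linarith
    have h2 : ∀ i n q, v n q - i * (ε / r) ≤ v (m * i + n) q := by
      intro i
      induction i with
      | zero => intro n q; simp
      | succ i ih =>
        intro n q
        have h3 := h1 (m * i + n) q
        rw [show m * (i+1) + n = m + (m * i + n) by ring]
        push_cast
        linarith [ih n q]
    refine ⟨m - 1, fun n q => ?_⟩
    have h3 := h2 r n q
    have hr0 : (r:ℝ) ≠ 0 := by positivity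
    rw [mul_div_cancel₀ _ hr0] at h3
    obtain ⟨m', rfl⟩ : ∃ m', m = m' + 1 := ⟨m - 1, by omega⟩
    rw [show r + r * (m' + 1 - 1) + n = (m'+1) * r + n by simp; ring]
    exact h3
  set R := S r with hR
  obtain ⟨u, G, Hu⟩ := M.exists_opt AllAl (fun _ _ => ⟨Classical.arbitrary A, trivial⟩) (ind R)
  have hu0 := Hu.nonneg (ind_nonneg R)
  have hu1 := Hu.le_one (ind_le_one R)
  obtain ⟨γ, hγ, hγ'⟩ : ∃ γ > (0:ℝ), ∀ q, v r q ≠ 1 → v r q ≤ 1 - γ := by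
    apply exists_below_gap (fun (q : Q) (x : ℝ) => v r q ≠ 1 → v r q ≤ 1 - x)
    · intro i x y hxy h h'; linarith [h h']
    · intro q
      by_cases hq : v r q = 1
      · exact ⟨1, one_pos, fun h => absurd hq h⟩
      · exact ⟨1 - v r q, by linarith [lt_of_le_of_ne (hv1 r q) hq], fun _ => by linarith⟩
  have huv : ∀ n q, v (r + n) q ≤ 1 - γ * (1 - u n q) := by
    refine Hv.upper Hu hγ.le (fun q => ?_)
    rw [Hu.zero]
    by_cases hq : v r q = 1
    · have : q ∈ R := hq
      simp [ind, this, hq]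
    · have : q ∉ R := hq
      simpa [ind, this] using hγ' q hq
  have huS : ∀ n q, q ∈ S (r + n) → u n q = 1 := by
    intro n
    induction n with
    | zero => intro q hq; rw [Hu.zero]; exact if_pos hq
    | succ n ih =>
      intro q hq
      rw [← add_assoc, hS] at hq
      obtain ⟨a, ha⟩ := hq
      exact (Hu.one_succ (ind_le_one R) n q).2 ⟨a, fun q' h => ih q' (ha q' h)⟩
  have humono : ∀ n q, u n q ≤ u (r + n) q := by
    intro n q
    have := Hu.lower Hu (k := r) (ε := 0) (fun q => by
      rw [Hu.zero]
      by_cases hq : q ∈ R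
      · rw [huS r q (by rw [hrr]; exact hq)]; simp [ind, hq]
      · have := hu0 r q
        simpa [ind, hq] using this) n q
    linarith
  have humono' : ∀ j n q, u n q ≤ u (n + r * j) q := by
    intro j
    induction j with
    | zero => intro n q; simp
    | succ j ih =>
      intro n q
      refine (ih n q).trans ?_
      have := humono (n + r * j) q
      rwa [show n + r * (j+1) = r + (n + r * j) by ring]
  set W : ℕ → Set Q := fun n => {q | ∀ ε > (0:ℝ), ∃ j, 1 - ε ≤ u (n + r * j) q} with hW
  have hWper : ∀ n, W (r + n) = W n := by
    intro n; ext q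
    constructor
    · intro h ε hε
      obtain ⟨j, hj⟩ := h ε hε
      exact ⟨j + 1, by rwa [show n + r * (j+1) = r + n + r * j by ring]⟩
    · intro h ε hε
      obtain ⟨j, hj⟩ := h ε hε
      refine ⟨j, hj.trans ?_⟩
      have := humono (n + r * j) q
      rwa [← add_assoc] at this
  have hWper' : ∀ j n, W (n + r * j) = W n := by
    intro j
    induction j with
    | zero => intro n; simp
    | succ j ih =>
      intro n
      rw [show n + r * (j+1) = r + (n + r * j) by ring, hWper, ih]
  obtain ⟨η, hη, hgap⟩ : ∃ η > (0:ℝ), ∀ n q, q ∉ W n → u n q ≤ 1 - η := by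
    obtain ⟨η, hη, hη'⟩ := exists_below_gap
      (fun (x : Fin r × Q) (y : ℝ) => x.2 ∉ W x.1 → ∀ j, u (x.1 + r * j) x.2 ≤ 1 - y)
      (fun i x y hxy h h' j => by linarith [h h' j])
      (by
        rintro ⟨c, q⟩
        by_cases hq : q ∈ W c
        · exact ⟨1, one_pos, fun h => absurd hq h⟩
        · have hq2 := hq
          simp only [hW, Set.mem_setOf_eq] at hq2
          push Not at hq2
          obtain ⟨ε, hε, h⟩ := hq2
          exact ⟨ε, hε, fun _ j => (h j).le⟩)
    refine ⟨η, hη, fun n q hq => ?_⟩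
    have hmod : n % r + r * (n / r) = n := Nat.mod_add_div n r
    have h1 := hη' (⟨n % r, Nat.mod_lt _ hr⟩, q)
      (by rw [← hmod, hWper'] at hq; exact hq) (n / r)
    simp only [hmod] at h1
    exact h1
  have hsafe : ∀ n q, q ∈ W (n+1) → ∃ a, ∀ q', 0 < M.δ q a q' → q' ∈ W n := by
    intro n q hq
    obtain ⟨j, hj⟩ := hq (κ * η / 2) (by positivity)
    refine ⟨G (n + r * j) q, fun q' hq' => ?_⟩
    by_contra hcon
    have h1 := hgap (n + r * j) q' (by rwa [hWper'])
    have h2 := M.ev_loss (w := u (n + r * j)) (hu1 _) (hκ' _ _ _ hq') hη.le h1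
    rw [← Hu.eq, show n + r * j + 1 = n + 1 + r * j by ring] at h2
    have : 0 < κ * η := by positivity
    linarith
  set Al : ℕ → Q → A → Prop := fun n q a => q ∈ W (n+1) → ∀ q', 0 < M.δ q a q' → q' ∈ W n with hAl
  have hAlne : ∀ n q, ∃ a, Al n q a := by
    intro n q
    by_cases hq : q ∈ W (n+1)
    · obtain ⟨a, ha⟩ := hsafe n q hq
      exact ⟨a, fun _ => ha⟩
    · exact ⟨Classical.arbitrary A, fun h => absurd h hq⟩
  obtain ⟨h, K, Hh⟩ := M.exists_opt Al hAlne (ind R)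
  have hh0 := Hh.nonneg (ind_nonneg R)
  have hh1 := Hh.le_one (ind_le_one R)
  have hSW : ∀ n q, q ∈ S (r + n) → q ∈ W n := by
    intro n q hq ε hε
    refine ⟨0, ?_⟩
    rw [mul_zero, add_zero, huS n q hq]; linarith
  have hhS : ∀ n q, q ∈ S (r + n) → h n q = 1 := by
    intro n
    induction n with
    | zero => intro q hq; rw [Hh.zero]; exact if_pos hq
    | succ n ih =>
      intro q hq
      rw [← add_assoc, hS] at hq
      obtain ⟨a, ha⟩ := hq
      refine le_antisymm (hh1 _ _) (le_trans ?_ (Hh.le n q a ?_))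
      · rw [← M.ev_const 1 q a]
        exact M.ev_mono fun q' h => (ih q' (ha q' h)).ge
      · exact fun _ q' hq' => hSW n q' (ha q' hq')
  have hhmono : ∀ n q, h n q ≤ h (r + n) q := by
    intro n
    induction n with
    | zero =>
      intro q
      rw [Hh.zero]
      by_cases hq : q ∈ R
      · have := hhS r q (by rw [hrr]; exact hq)
        rw [add_zero, this]; exact ind_le_one _ _
      · have := hh0 r q
        simpa [ind, hq] using this
    | succ n ih =>
      intro q
      rw [Hh.eq, ← add_assoc]
      refine (M.ev_mono fun q' _ => ih q').trans (Hh.le (r + n) q (K n q) ?_)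
      have := Hh.al n q
      simp only [hAl] at this ⊢
      rw [add_assoc, hWper, hWper]
      exact this
  have hhmono' : ∀ j n q, h n q ≤ h (n + r * j) q := by
    intro j
    induction j with
    | zero => intro n q; simp
    | succ j ih =>
      intro n q
      refine (ih n q).trans ?_
      have := hhmono (n + r * j) q
      rwa [show n + r * (j+1) = r + (n + r * j) by ring]
  have hZ : ∀ n q, q ∈ W n → (∀ j, h (n + r * j) q ≤ 0) → u n q ≤ 1 - min 1 (κ * η) := by
    intro n
    induction n with
    | zero =>
      intro q _ hz
      have h1 := hz 0
      rw [mul_zero, add_zero, Hh.zero] at h1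
      rw [Hu.zero]
      have := min_le_left 1 (κ * η)
      linarith
    | succ n ih =>
      intro q hq hz
      rw [Hu.eq]
      by_cases hall : ∀ q', 0 < M.δ q (G n q) q' → q' ∈ W n
      · rw [← M.ev_const (1 - min 1 (κ * η)) q (G n q)]
        refine M.ev_mono fun q' hq' => ih q' (hall q' hq') fun j => ?_
        by_contra hpos
        push Not at hpos
        have h1 := Hh.le (n + r * j) q (G n q) (by
          intro _
          rw [hWper']
          exact hall)
        rw [show n + r * j + 1 = n + 1 + r * j by ring] at h1
        have h2 : M.δ q (G n q) q' * h (n + r * j) q' ≤ M.ev (h (n + r * j)) q (G n q) :=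
          Finset.single_le_sum (f := fun x => M.δ q (G n q) x * h (n + r * j) x)
            (fun x _ => mul_nonneg (M.δ_nonneg _ _ _) (hh0 _ _)) (Finset.mem_univ q')
        have h3 := mul_pos hq' hpos
        linarith [hz j]
      · push Not at hall
        obtain ⟨q', hq', hnW⟩ := hall
        have := M.ev_loss (hu1 n) (hκ' _ _ _ hq') hη.le (hgap n q' hnW)
        linarith [min_le_right 1 (κ * η)]
  have hpos : ∀ q, q ∈ W 0 → ∃ j, 0 < h (r * j) q := by
    intro q hq
    by_contra hcon
    push Not at hcon
    have hm : 0 < min 1 (κ * η) := lt_min one_pos (by positivity)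
    obtain ⟨j, hj⟩ := hq (min 1 (κ * η) / 2) (by positivity)
    have := hZ (0 + r * j) q (by rw [hWper']; exact hq) (fun i => by
      have := hcon (j + i)
      rwa [show 0 + r * j + r * i = r * (j + i) by ring])
    linarith
  obtain ⟨J, hJ⟩ : ∃ J, ∀ q, q ∈ W 0 → 0 < h (r * J) q := by
    have : ∀ q, ∃ j, q ∈ W 0 → 0 < h (r * j) q := by
      intro q
      by_cases hq : q ∈ W 0
      · obtain ⟨j, hj⟩ := hpos q hq; exact ⟨j, fun _ => hj⟩
      · exact ⟨0, fun h => absurd h hq⟩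
    choose g hg using this
    refine ⟨∑ q, g q, fun q hq => (hg q hq).trans_le ?_⟩
    have hle : g q ≤ ∑ q, g q := Finset.single_le_sum (f := g) (fun _ _ => Nat.zero_le _) (Finset.mem_univ q)
    obtain ⟨k, hk⟩ := Nat.exists_eq_add_of_le hle
    rw [hk, mul_add]
    exact hhmono' k _ q
  obtain ⟨p, hp, hp'⟩ : ∃ p > (0:ℝ), ∀ q, q ∈ W 0 → p ≤ h (r * J) q := by
    apply exists_below_gap (fun (q : Q) (x : ℝ) => q ∈ W 0 → x ≤ h (r * J) q)
    · intro i x y hxy h h'; linarith [h h']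
    · intro q
      by_cases hq : q ∈ W 0
      · exact ⟨_, hJ q hq, fun _ => le_rfl⟩
      · exact ⟨1, one_pos, fun h => absurd h hq⟩
  have hamp : ∀ (x : ℝ) (i : ℕ), x ≤ 1 → (∀ q, q ∈ W 0 → x ≤ h (r * i) q) →
      ∀ m q, q ∈ W m → x + (1 - x) * h m q ≤ h (m + r * i) q := by
    intro x i hx1 hx m
    induction m with
    | zero =>
      intro q hq
      rw [Hh.zero, zero_add]
      by_cases hqR : q ∈ R
      · have h1 := hhmono' i 0 q
        rw [Hh.zero, zero_add] at h1
        simp only [ind, hqR, if_true] at h1 ⊢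
        linarith
      · simpa [ind, hqR] using hx q hq
    | succ m ih =>
      intro q hq
      rw [Hh.eq, ← ev_affine, show m + 1 + r * i = m + r * i + 1 by ring]
      have hal := Hh.al m q
      refine (M.ev_mono fun q' hq' => ih q' (hal hq q' hq')).trans (Hh.le (m + r * i) q (K m q) ?_)
      intro _
      rw [hWper']
      exact hal hq
  have hpow : ∀ i : ℕ, ∀ q, q ∈ W 0 → 1 - (1 - min p 1) ^ i ≤ h (r * (J * i)) q := by
    intro i
    have hp0 : 0 ≤ 1 - min p 1 := by linarith [min_le_right p 1]
    induction i with
    | zero => intro q _; simpa using hh0 0 q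
    | succ i ih =>
      intro q hq
      have h1 := hamp _ (J * i) (by linarith [pow_nonneg hp0 i]) ih (r * J) q
        (by have := hWper' J 0; rw [zero_add] at this; rw [this]; exact hq)
      rw [show r * (J * (i+1)) = r * J + r * (J * i) by ring]
      refine le_trans ?_ h1
      have h2 := hp' q hq
      have h3 := min_le_left p 1
      have h4 := pow_nonneg hp0 i
      rw [pow_succ]
      nlinarith
  have hTW : ∀ q ∈ T', q ∈ W 0 := by
    intro q hq ε hε
    obtain ⟨j, hj⟩ := hT (γ * ε) (by positivity)
    refine ⟨j, ?_⟩
    have h1 := hj 0 q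
    rw [Hv.zero] at h1
    simp only [ind, hq, if_true, add_zero] at h1
    have h2 := huv (r * j) q
    have h3 : γ * (1 - u (r * j) q) ≤ γ * ε := by linarith
    have := le_of_mul_le_mul_left h3 hγ
    rw [zero_add]; linarith
  refine ⟨W 0, ?_, ?_⟩
  · intro ε hε
    obtain ⟨i, hi⟩ := exists_pow_lt_of_lt_one hε
      (show 1 - min p 1 < 1 by linarith [lt_min hp one_pos])
    have hdesc : ∀ n q, ∃ a, (q ∈ S (n+1) → ∀ q', 0 < M.δ q a q' → q' ∈ S n) ∧
        (q ∉ S (n+1) → Al n q a) := by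
      intro n q
      by_cases hq : q ∈ S (n+1)
      · have hq2 := hq
        rw [hS] at hq2
        obtain ⟨a, ha⟩ := hq2
        exact ⟨a, fun _ => ha, fun h => absurd hq h⟩
      · obtain ⟨a, ha⟩ := hAlne n q
        exact ⟨a, fun h => absurd h hq, fun _ => ha⟩
    choose L hL1 hL2 using hdesc
    refine ⟨pol K (r * (J * i)) ++ pol L r, ?_, ?_⟩
    · intro hnil
      have := congrArg List.length hnil
      simp [pol_length] at this
      omega
    intro d hd hdW
    have hd' := M.run_isDist hd (pol K (r * (J * i)))
    have hsupp1 := M.run_pol_supp (F := K) (I := W) (r * (J * i))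
      (fun m _ q hq q' hq' => Hh.al m q hq q' hq') hd.1
      (fun q hq => by
        have := hWper' (J * i) 0
        rw [zero_add] at this
        rw [this]; exact hdW q hq)
    have hval1 := M.run_pol_value (F := K) (H := h) (fun n q => (Hh.eq n q).le) (r * (J * i)) hd.1
    have hval0 : 1 - ε ≤ ∑ q, d q * h (r * (J * i)) q :=
      sum_of_pointwise hd fun q hq => by linarith [hpow i q (hdW q hq)]
    rw [Hh.zero] at hval1
    rw [run_append]
    constructor
    · intro q hq
      have := M.run_pol_supp (F := L) (I := fun n => S n ∪ W n) r
        (fun m _ q hq q' hq' => by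
          by_cases hqS : q ∈ S (m+1)
          · exact Or.inl (hL1 m q hqS q' hq')
          · exact Or.inr (hL2 m q hqS (hq.resolve_left hqS) q' hq')) hd'.1
        (fun q hq => Or.inr (by
          have := hWper 0
          rw [add_zero] at this
          rw [this]; exact hsupp1 q hq)) q hq
      rcases this with h1 | h1
      · rw [hS0] at h1; exact hTW q h1
      · exact h1
    · have hval2 := M.run_pol_value (F := L) (H := fun n => ind (S n)) (by
        intro n q
        by_cases hq : q ∈ S (n+1)
        · simp only [ind, hq, if_true]
          rw [← M.ev_const 1 q (L n q)]
          refine M.ev_mono fun q' hq' => ?_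
          have := hL1 n q hq q' hq'
          exact (if_pos this).ge
        · simp only [ind, hq, if_false]
          rw [← M.ev_const 0 q (L n q)]
          exact M.ev_mono fun q' hq' => ind_nonneg (S n) q') r hd'.1
      rw [mass_eq]
      simp only [hS0] at hval2
      linarith
  · intro d hd hls
    obtain ⟨n, hn⟩ := hls (γ * (η / 4)) (by positivity)
    obtain ⟨j, hj⟩ := hT (γ * (η / 4)) (by positivity)
    have hmem : ∀ q, 0 < d q → q ∈ W (r * j + n) := by
      intro q hq
      by_contra hcon
      have h1 := hgap _ q hcon
      have h2 := huv (r * j + n) q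
      have h3 := hj n q
      have h4 := hn q hq
      rw [add_assoc] at h3
      have h5 : γ * (1 - u (r * j + n) q) ≤ γ * (η / 2) := by linarith
      have := le_of_mul_le_mul_left h5 hγ
      linarith
    exact ⟨pol K (r * j + n), M.run_pol_supp (F := K) (I := W) _
      (fun m _ q hq q' hq' => Hh.al m q hq q' hq') hd.1 hmem⟩

lemma exists_seq_of_prefixes {α : Type} (L : ℕ → List α) (hL : ∀ i, ∃ t, L (i+1) = L i ++ t)
    (hlen : ∀ i, i ≤ (L i).length) :
    ∃ f : ℕ → α, ∀ i, (List.range (L i).length).map f = L i := by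
  have hpre : ∀ i j, i ≤ j → L i <+: L j := by
    intro i j hij
    induction j, hij using Nat.le_induction with
    | base => exact List.prefix_refl _
    | succ j _ ih =>
      obtain ⟨t, ht⟩ := hL j
      exact ih.trans ⟨t, ht.symm⟩
  have hlt : ∀ n, n < (L (n+1)).length := fun n => hlen (n+1)
  refine ⟨fun n => (L (n+1))[n]'(hlt n), fun i => ?_⟩
  apply List.ext_getElem
  · simp
  · intro n h1 h2
    simp only [List.getElem_map, List.getElem_range]
    rcases le_total i (n+1) with h | h
    · exact ((hpre _ _ h).getElem h2).symm
    · exact (hpre _ _ h).getElem (hlt n)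

lemma backward (M : MDP Q A) {d0 : Q → ℝ} (hd0 : IsDist d0) {T T' : Set Q} (hsub : T' ⊆ T)
    (h1 : M.LimitSureEventually d0 T') (h2 : M.LimitSureEventually (uniformOn T') (M.Pre T')) :
    M.ASWeakly d0 T := by
  have hQ := dist_nonempty hd0
  have hA : Nonempty A := by
    obtain ⟨σ, hσ, -⟩ := h1 1 one_pos
    exact strategy_nonempty hσ (Classical.arbitrary Q)
  have hne : T'.Nonempty := by
    by_contra hne
    rw [Set.not_nonempty_iff_eq_empty] at hne
    obtain ⟨σ, hσ, i, hi⟩ := h1 (1/2) (by norm_num)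
    rw [hne] at hi
    simp [mass] at hi
    norm_num at hi
  obtain ⟨v, F, Hv⟩ := M.exists_opt AllAl (fun _ _ => ⟨Classical.arbitrary A, trivial⟩) (ind T')
  obtain ⟨u, G, Hu⟩ := M.exists_opt AllAl (fun _ _ => ⟨Classical.arbitrary A, trivial⟩) (ind (M.Pre T'))
  rw [M.ls_iff hd0 Hv] at h1
  rw [M.ls_iff (uniformOn_isDist hne) Hu] at h2
  have hlow := Hv.lower Hu (ε := 0) (k := 1) (by
    intro q
    rw [Hu.zero]
    by_cases hq : q ∈ M.Pre T'
    · obtain ⟨a, ha⟩ := hq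
      have := (Hv.one_succ (ind_le_one T') 0 q).2 ⟨a, fun q' hq' => by
        rw [Hv.zero]; simp [ind, ha q' hq']⟩
      rw [zero_add] at this
      rw [this]
      linarith [ind_le_one (M.Pre T') q]
    · have := Hv.nonneg (ind_nonneg T') 1 q
      simpa [ind, hq] using this)
  obtain ⟨W, hW1, hW2⟩ := M.core Hv (by
    intro ε hε
    obtain ⟨n, hn⟩ := h2 ε hε
    refine ⟨1 + n, by omega, fun q hq => ?_⟩
    linarith [hlow n q, hn q ((uniformOn_pos q).2 hq)])
  obtain ⟨l0, hl0⟩ := hW2 d0 hd0 h1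
  choose l hlne hl using fun k : ℕ => hW1 (1 / ((k:ℝ) + 1)) (by positivity)
  obtain ⟨L, hL0, hLs⟩ : ∃ L : ℕ → List (Q → A), L 0 = l0 ∧ ∀ k, L (k+1) = L k ++ l k :=
    ⟨fun n => Nat.rec l0 (fun k acc => acc ++ l k) n, rfl, fun k => rfl⟩
  have hlen : ∀ k, k ≤ (L k).length := by
    intro k
    induction k with
    | zero => exact Nat.zero_le _
    | succ k ih =>
      rw [hLs, List.length_append]
      have := List.length_pos_iff.2 (hlne k)
      omega
  have hLW : ∀ k q, 0 < M.run d0 (L k) q → q ∈ W := by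
    intro k
    induction k with
    | zero => rw [hL0]; exact hl0
    | succ k ih =>
      rw [hLs, run_append]
      exact (hl k _ (M.run_isDist hd0 _) ih).1
  obtain ⟨f, hf⟩ := exists_seq_of_prefixes L (fun i => ⟨l i, hLs i⟩) hlen
  refine ⟨markov f, markov_isStrategy f, fun ε hε => ?_⟩
  rw [Set.infinite_iff_exists_gt]
  intro N
  obtain ⟨n, hn⟩ := exists_nat_one_div_lt hε
  have hk1 : (1:ℝ) / (((n + N : ℕ) : ℝ) + 1) ≤ 1 / ((n:ℝ) + 1) := by
    apply one_div_le_one_div_of_le (by positivity)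
    push_cast
    linarith [(Nat.cast_nonneg N : (0:ℝ) ≤ N)]
  refine ⟨(L (n + N + 1)).length, ?_, ?_⟩
  · rw [Set.mem_setOf_eq, stepDist_markov, hf, hLs, run_append]
    have h3 := (hl (n + N) _ (M.run_isDist hd0 _) (hLW (n + N))).2
    have hd := M.run_isDist (M.run_isDist hd0 (L (n + N))) (l (n + N))
    have h4 : mass (M.run (M.run d0 (L (n + N))) (l (n + N))) T' ≤
        mass (M.run (M.run d0 (L (n + N))) (l (n + N))) T := by
      rw [mass_eq, mass_eq]
      refine Finset.sum_le_sum fun q _ => mul_le_mul_of_nonneg_left ?_ (hd.1 q)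
      by_cases hq : q ∈ T'
      · simp [ind, hq, hsub hq]
      · simp only [ind, hq, if_false]; split_ifs <;> norm_num
    linarith
  · have := hlen (n + N + 1)
    omega

end MDP
open MDP in
/-- `d0` is almost-sure weakly synchronizing in `T` iff there is `T' ⊆ T` such
that `d0` is limit-sure eventually synchronizing in `T'` and (the uniform
distribution on) `T'` is limit-sure eventually synchronizing in `Pre(T')`. -/
theorem stmt6 {Q A : Type} [Fintype Q] [Fintype A] (M : MDP Q A)
    (d0 : Q → ℝ) (hd0 : IsDist d0) (T : Set Q) :
    M.ASWeakly d0 T ↔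
      ∃ T' ⊆ T, M.LimitSureEventually d0 T' ∧
        M.LimitSureEventually (uniformOn T') (M.Pre T') := by
  constructor
  · exact fun h => M.forward hd0 h
  · rintro ⟨T', hsub, h1, h2⟩
    exact M.backward hd0 hsub h1 h2
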